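/- Let u₁, …, uₙ ∈ Σ* and let N be a natural number with N > |u₁| + … + |uₙ|. Then ⧢₂ⁿ(u₁, …, uₙ) = ⋃_{0 ≤ k₁, …, kₙ ≤ N} { h(⧢₁ⁿ($^{k₁}u₁, …, $^{kₙ}uₙ)) }, where the n-ary initial literal shuffle on the right is taken over the alphabet Σ ∪ {$}. -/

import Mathlib

/-!
Both sides erase an interleaving of the words `uᵢ`, each delayed by some `kᵢ`: reading the
interleaving column by column, column `t` consists of the letters `uᵢ[t - kᵢ]` that exist, and
trailing padding contributes nothing. So each side is a set of words `columnWord us k T`, and only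
the bounds on the delays and on the width `T` differ (`shuffle2_eq`, `erase_shuffle1_eq`).

The bounds do not matter because empty columns can be deleted (`exists_compressed`). Replacing each
delay `kᵢ` by the number of nonempty columns before `kᵢ` (`columnRank`) keeps `uᵢ` contiguous, since
all columns it meets are nonempty, and hence leaves the word unchanged. There are at most
`S = |u₁| + … + |uₙ|` nonempty columns, so after compression each `uᵢ` ends by column `S`.
This satisfies the constraint of either side, as `S < N` and `S ≤ n · maxᵢ |uᵢ|`.
-/

/-!
Common definitions.

Words over an alphabet `β` are modelled as `List β`.  The alphabet
`Σ ∪ {$}` is modelled as `Option β`, where `none` plays the role of the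
dollar sign `$` and `some x` the role of a letter `x ∈ Σ`.  The erasing
homomorphism `h` (with `h($) = ε`, `h(x) = x`) is `List.reduceOption`.
-/

/-- Perfect interleaving `I(v₁, …, vₙ)` of equal-length words, read column-wise. -/
def interleave {β : Type*} (vs : List (List β)) : List β :=
  vs.transpose.flatten

/-- `$^k u $^r`, the two-sided dollar padding of the word `u`. -/
def dollarPad {β : Type*} (k : ℕ) (u : List β) (r : ℕ) : List (Option β) :=
  List.replicate k none ++ u.map some ++ List.replicate r none

/-- The `n`-ary initial literal shuffle `⧢₁ⁿ(u₁, …, uₙ)`: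
pad each word with a fresh symbol (`none`) to the maximal length `N`,
interleave, and erase the fresh symbols. -/
def shuffle1 {β : Type*} {n : ℕ} (us : Fin n → List β) : List β :=
  (interleave (List.ofFn fun i =>
    (us i).map some ++
      List.replicate ((Finset.univ.sup fun j => (us j).length) - (us i).length)
        (none : Option β))).reduceOption

/-- The `n`-ary literal shuffle `⧢₂ⁿ(u₁, …, uₙ)`:
all erased interleavings of paddings `$^k uᵢ $^{r-k}` with `r = n·N - |uᵢ|`. -/
def shuffle2 {β : Type*} {n : ℕ} (us : Fin n → List β) : Set (List β) :=
  { w | ∃ k : Fin n → ℕ,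
      (∀ i, k i ≤ n * (Finset.univ.sup fun j => (us j).length) - (us i).length) ∧
      w = (interleave (List.ofFn fun i =>
        dollarPad (k i) (us i)
          (n * (Finset.univ.sup fun j => (us j).length) - (us i).length - k i))).reduceOption }

/-- Extension of `⧢₁ⁿ` to languages. -/
def shuffle1L {β : Type*} {n : ℕ} (Ls : Fin n → Set (List β)) : Set (List β) :=
  { w | ∃ us : Fin n → List β, (∀ i, us i ∈ Ls i) ∧ w = shuffle1 us }

/-- Extension of `⧢₂ⁿ` to languages. -/
def shuffle2L {β : Type*} {n : ℕ} (Ls : Fin n → Set (List β)) : Set (List β) :=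
  { w | ∃ us : Fin n → List β, (∀ i, us i ∈ Ls i) ∧ w ∈ shuffle2 us }

/-- Iterated version `L^{⧢₁,*} = {ε} ∪ ⋃_{n ≥ 1} ⧢₁ⁿ(L, …, L)`. -/
def itShuffle1 {β : Type*} (L : Set (List β)) : Set (List β) :=
  {([] : List β)} ∪ ⋃ (n : ℕ) (_ : 1 ≤ n), shuffle1L (fun _ : Fin n => L)

/-- Iterated version `L^{⧢₂,*} = {ε} ∪ ⋃_{n ≥ 1} ⧢₂ⁿ(L, …, L)`. -/
def itShuffle2 {β : Type*} (L : Set (List β)) : Set (List β) :=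
  {([] : List β)} ∪ ⋃ (n : ℕ) (_ : 1 ≤ n), shuffle2L (fun _ : Fin n => L)

/-- `IsShuffle u v w` : `w` is an interleaving of `u` and `v`
(ordinary shuffle of words). -/
inductive IsShuffle {β : Type*} : List β → List β → List β → Prop
  | nil : IsShuffle [] [] []
  | left {a : β} {u v w : List β} : IsShuffle u v w → IsShuffle (a :: u) v (a :: w)
  | right {a : β} {u v w : List β} : IsShuffle u v w → IsShuffle u (a :: v) (a :: w)

/-- Ordinary shuffle of languages `U ⧢ V`. -/
def shuffleL {β : Type*} (U V : Set (List β)) : Set (List β) :=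
  { w | ∃ u ∈ U, ∃ v ∈ V, IsShuffle u v w }

/-- `n`-fold ordinary shuffle `L₁ ⧢ ⋯ ⧢ Lₙ` (iterated binary shuffle;
`{ε}` is the neutral element). -/
def shuffleN {β : Type*} {n : ℕ} (Ls : Fin n → Set (List β)) : Set (List β) :=
  (List.ofFn Ls).foldr shuffleL {([] : List β)}

/-- Iterated ordinary shuffle closure `L^{⧢,*}`. -/
def itShuffleO {β : Type*} (L : Set (List β)) : Set (List β) :=
  {([] : List β)} ∪ ⋃ (n : ℕ) (_ : 1 ≤ n), shuffleN (fun _ : Fin n => L)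

/-- Bérard's binary initial literal shuffle of languages. -/
def berardShuffle1 {β : Type*} (U V : Set (List β)) : Set (List β) :=
  { w | (∃ x y v, x ++ y ∈ U ∧ v ∈ V ∧ x.length = v.length ∧ w = interleave [x, v] ++ y) ∨
        (∃ u x y, u ∈ U ∧ x ++ y ∈ V ∧ x.length = u.length ∧ w = interleave [u, x] ++ y) }

/-- A three-letter alphabet `Σ = {a, b, c}`. -/
inductive ABC : Type
  | a | b | c
deriving DecidableEq

/-! ### Transposition of equal-length words -/

/-- Running `pop` over the columns `acc` puts the letters of `l` on top of the first columns and
leaves the unused letters as the final state. -/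
theorem mapM_pop {β : Type*} (acc : List (List β)) (l : List β) :
    (acc.mapM List.transpose.pop : StateM (List β) (List (List β))) l
      = (List.zipWith List.cons l acc ++ acc.drop l.length, l.drop acc.length) := by
  induction acc generalizing l with
  | nil => simp; rfl
  | cons a acc ih =>
    rw [List.mapM_cons]
    cases l with
    | nil =>
      have := ih []
      simp only [bind, StateT.bind, List.transpose.pop, this]
      simp; rfl
    | cons x l =>
      have := ih l
      simp only [bind, StateT.bind, List.transpose.pop, this]
      simp; rfl

theorem foldl_push {β : Type*} (l : List β) (acc : Array (List β)) :
    (l.foldl (init := acc) fun arr a => arr.push [a]).toList = acc.toList ++ l.map ([·]) := by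
  simp

/-- One step of `List.transpose`. Equal lengths leave only the `zipWith` part, and an empty `acc`
leaves only the singleton columns. -/
theorem transpose_go {β : Type*} (l : List β) (acc : Array (List β)) :
    (List.transpose.go l acc).toList = List.zipWith List.cons l acc.toList ++
      acc.toList.drop l.length ++ (l.drop acc.size).map ([·]) := by
  have h : (acc.mapM List.transpose.pop : StateM (List β) (Array (List β))) l
      = ((List.zipWith List.cons l acc.toList ++ acc.toList.drop l.length).toArray,
          l.drop acc.size) := by
    rw [Array.mapM_eq_mapM_toList]
    have := mapM_pop acc.toList l
    simp only [Functor.map, StateT.map, bind, pure, this]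
    simp
  unfold List.transpose.go
  rw [h]
  simp only [foldl_push]

/-- Column `t` of the transpose lists the `t`-th letters. The list of words must be nonempty: the
transpose of `[]` has no columns, whatever `T` is. -/
theorem transpose_eq {β : Type*} (T : ℕ) (ls : List (List β)) (hne : ls ≠ [])
    (h : ∀ l ∈ ls, l.length = T) :
    ls.transpose = (List.range T).map fun t => ls.filterMap (·[t]?) := by
  induction ls with
  | nil => exact absurd rfl hne
  | cons l ls ih =>
    have hl : l.length = T := h l (by simp)
    have hc : (l :: ls).transpose = (List.transpose.go l (ls.foldr List.transpose.go #[])).toList :=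
      rfl
    rw [hc, transpose_go]
    by_cases h0 : ls = []
    · subst h0
      apply List.ext_getElem
      · simp [hl]
      · intro i h1 h2
        simp at h1
        simp [h1]
    · have ih' := ih h0 (fun m hm => h m (by simp [hm]))
      have hsz : (ls.foldr List.transpose.go #[]).size = T := by
        have := congrArg List.length ih'
        simpa [List.transpose] using this
      unfold List.transpose at ih'
      rw [ih', hsz]
      apply List.ext_getElem
      · simp [hl]
      · intro i h1 h2
        simp at h2
        simp [hl, h2]

theorem interleave_eq {β : Type*} (T : ℕ) (ls : List (List β)) (h : ∀ l ∈ ls, l.length = T) :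
    interleave ls = (List.range T).flatMap fun t => ls.filterMap (·[t]?) := by
  by_cases hne : ls = []
  · subst hne
    simp [interleave, List.transpose]
  · rw [interleave, transpose_eq T ls hne h, List.flatMap]

theorem reduceOption_interleave {β : Type*} {n : ℕ} (T : ℕ) (v : Fin n → List (Option β))
    (h : ∀ i, (v i).length = T) :
    (interleave (List.ofFn v)).reduceOption =
      (List.range T).flatMap fun t => (List.ofFn fun i => (v i)[t]?.join).reduceOption := by
  rw [interleave_eq T _ (by simpa [List.mem_ofFn] using h)]
  unfold List.reduceOption
  rw [List.filterMap_flatMap]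
  congr 1
  funext t
  rw [List.filterMap_filterMap, List.ofFn_eq_map, List.ofFn_eq_map, List.filterMap_map,
    List.filterMap_map]
  congr 1

/-! ### The two shuffles as column words -/

/-- The letter in position `t` of `$^k u`, or `none` for a dollar or a position beyond the end. -/
def letterAt {α : Type*} (u : List α) (k t : ℕ) : Option α :=
  if k ≤ t then u[t - k]? else none

/-- The letters in column `t` when each word `us i` is delayed by `k i`, with dollars erased. -/
def column {α : Type*} {n : ℕ} (us : Fin n → List α) (k : Fin n → ℕ) (t : ℕ) : List α :=
  (List.ofFn fun i => letterAt (us i) (k i) t).reduceOption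

/-- The first `T` columns, concatenated. -/
def columnWord {α : Type*} {n : ℕ} (us : Fin n → List α) (k : Fin n → ℕ) (T : ℕ) : List α :=
  (List.range T).flatMap (column us k)

theorem join_dollarPad {α : Type*} (k : ℕ) (u : List α) (r t : ℕ) :
    (dollarPad k u r)[t]?.join = letterAt u k t := by
  unfold dollarPad letterAt
  rw [List.append_assoc, List.getElem?_append, List.getElem?_append]
  simp only [List.length_replicate, List.length_map, List.getElem?_replicate, List.getElem?_map]
  rcases lt_or_ge t k with h | h
  · simp [h, not_le.mpr h]
  · simp only [not_lt.mpr h, h, if_false, if_true]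
    split_ifs with h1 h2
    · simp [h1]
    · simp; omega
    · simp; omega

theorem shuffle2_eq {α : Type*} {n : ℕ} (us : Fin n → List α) :
    shuffle2 us = { w | ∃ k : Fin n → ℕ,
      (∀ i, k i + (us i).length ≤ n * (Finset.univ.sup fun j => (us j).length)) ∧
      w = columnWord us k (n * (Finset.univ.sup fun j => (us j).length)) } := by
  have hlen (i : Fin n) : (us i).length ≤ n * (Finset.univ.sup fun j => (us j).length) :=
    (Finset.le_sup (f := fun j => (us j).length) (Finset.mem_univ i)).trans
      (Nat.le_mul_of_pos_left _ i.pos)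
  ext w
  refine exists_congr fun k => ?_
  have hk (i : Fin n) : k i ≤ n * (Finset.univ.sup fun j => (us j).length) - (us i).length ↔
      k i + (us i).length ≤ n * (Finset.univ.sup fun j => (us j).length) := by
    have := hlen i
    omega
  simp only [hk]
  refine and_congr_right fun h => ?_
  rw [reduceOption_interleave (n * (Finset.univ.sup fun j => (us j).length))]
  · simp only [join_dollarPad]
    rfl
  · intro i
    have := h i
    simp [dollarPad]
    omega

/-- Erasing the fresh padding symbol and then the dollars amounts to erasing both at once. -/
theorem reduceOption_reduceOption {β : Type*} (l : List (Option (Option β))) :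
    l.reduceOption.reduceOption = (l.map Option.join).reduceOption := by
  unfold List.reduceOption
  rw [List.filterMap_filterMap, List.filterMap_map]
  congr 1

theorem join_join_pad {α : Type*} (k : ℕ) (u : List α) (r t : ℕ) :
    (((List.replicate k (none : Option α) ++ u.map some).map some ++
      List.replicate r none)[t]?.join).join = letterAt u k t := by
  rw [← join_dollarPad k u r, dollarPad, List.getElem?_append, List.getElem?_append,]
  simp only [List.length_map, List.getElem?_map, List.length_append]
  split_ifs with h
  · cases (List.replicate k (none : Option α) ++ u.map some)[t]? <;> rfl
  · rw [List.getElem?_replicate, List.getElem?_replicate]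
    split_ifs <;> rfl

theorem erase_shuffle1_eq {α : Type*} {n : ℕ} (us : Fin n → List α) (k : Fin n → ℕ) :
    (shuffle1 fun i => List.replicate (k i) (none : Option α) ++ (us i).map some).reduceOption =
      columnWord us k (Finset.univ.sup fun i => k i + (us i).length) := by
  unfold shuffle1
  rw [reduceOption_interleave (Finset.univ.sup fun i => k i + (us i).length)]
  · rw [columnWord, List.reduceOption, List.filterMap_flatMap]
    congr 1
    funext t
    refine (reduceOption_reduceOption _).trans ?_
    rw [List.map_ofFn, column]
    congr 2
    funext i
    exact join_join_pad _ _ _ _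
  · intro i
    have := Finset.le_sup (f := fun i => k i + (us i).length) (Finset.mem_univ i)
    simp at this ⊢
    omega

/-! ### Deletion of empty columns -/

open Classical in
/-- The number of nonempty columns before column `t`, which is the new position of column `t` once
the empty columns are deleted. -/
noncomputable def columnRank {α : Type*} {n : ℕ} (us : Fin n → List α) (k : Fin n → ℕ) (t : ℕ) : ℕ :=
  Nat.count (fun s => column us k s ≠ []) t

theorem letterAt_isSome {α : Type*} {u : List α} {k t : ℕ} :
    (letterAt u k t).isSome ↔ k ≤ t ∧ t < k + u.length := by
  unfold letterAt
  split_ifs with h <;> simp [h]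
  omega

theorem column_ne_nil {α : Type*} {n : ℕ} {us : Fin n → List α} {k : Fin n → ℕ} {t : ℕ} :
    column us k t ≠ [] ↔ ∃ i, k i ≤ t ∧ t < k i + (us i).length := by
  simp only [← letterAt_isSome, column, ne_eq, List.reduceOption, List.filterMap_eq_nil_iff,
    List.mem_ofFn]
  simp [Option.isSome_iff_ne_none]

theorem columnRank_mono {α : Type*} {n : ℕ} (us : Fin n → List α) (k : Fin n → ℕ) :
    Monotone (columnRank us k) := Nat.count_monotone _

/-- Every nonempty column lies in one of the intervals occupied by the words, and these have total
length `∑ i, (us i).length`. -/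
theorem columnRank_le {α : Type*} {n : ℕ} (us : Fin n → List α) (k : Fin n → ℕ) (t : ℕ) :
    columnRank us k t ≤ ∑ i, (us i).length := by
  classical
  rw [columnRank, Nat.count_eq_card_filter_range]
  calc _ ≤ (Finset.univ.biUnion fun i => Finset.Ico (k i) (k i + (us i).length)).card := by
        apply Finset.card_le_card
        intro s hs
        simpa using column_ne_nil.mp (Finset.mem_filter.mp hs).2
    _ ≤ ∑ i, (Finset.Ico (k i) (k i + (us i).length)).card := Finset.card_biUnion_le
    _ = _ := by simp

/-- All columns met by `us i` are nonempty, so compression is a translation there. -/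
theorem columnRank_add {α : Type*} {n : ℕ} (us : Fin n → List α) (k : Fin n → ℕ) (i : Fin n)
    {d : ℕ} (hd : d ≤ (us i).length) : columnRank us k (k i + d) = columnRank us k (k i) + d := by
  classical
  induction d with
  | zero => rfl
  | succ d ih =>
    have hne : column us k (k i + d) ≠ [] := column_ne_nil.mpr ⟨i, by omega, by omega⟩
    have := ih (by omega)
    unfold columnRank at this ⊢
    rw [← add_assoc, Nat.count_succ, if_pos hne, this, add_assoc]

theorem columnRank_succ {α : Type*} {n : ℕ} {us : Fin n → List α} {k : Fin n → ℕ} {t : ℕ}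
    (h : column us k t ≠ []) : columnRank us k (t + 1) = columnRank us k t + 1 := by
  unfold columnRank
  rw [Nat.count_succ, if_pos h]

/-- Compression moves each nonempty column without changing its content. -/
theorem column_columnRank {α : Type*} {n : ℕ} {us : Fin n → List α} {k : Fin n → ℕ} {t : ℕ}
    (h : column us k t ≠ []) :
    column us (fun i => columnRank us k (k i)) (columnRank us k t) = column us k t := by
  unfold column
  congr 2
  funext i
  unfold letterAt
  beta_reduce
  rcases lt_or_ge t (k i) with hlt | hle
  -- `us i` starts after column `t`; this stays so because column `t` is itself counted.
  · have h1 := columnRank_mono us k (Nat.succ_le_of_lt hlt)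
    rw [Nat.succ_eq_add_one, columnRank_succ h] at h1
    rw [if_neg (by omega), if_neg (by omega)]
  · rw [if_pos (columnRank_mono us k hle), if_pos hle]
    rcases le_total (t - k i) (us i).length with hd | hd
    · have := columnRank_add us k i hd
      rw [Nat.add_sub_cancel' hle] at this
      rw [this, Nat.add_sub_cancel_left]
    · have h1 := columnRank_add us k i le_rfl
      have h2 := columnRank_mono us k (show k i + (us i).length ≤ t by omega)
      rw [List.getElem?_eq_none (by omega), List.getElem?_eq_none (by omega)]

theorem columnWord_columnRank {α : Type*} {n : ℕ} (us : Fin n → List α) (k : Fin n → ℕ) (T : ℕ) :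
    columnWord us (fun i => columnRank us k (k i)) (columnRank us k T) = columnWord us k T := by
  induction T with
  | zero => simp [columnWord, columnRank]
  | succ T ih =>
    by_cases h : column us k T = []
    · have : columnRank us k (T + 1) = columnRank us k T := by simp [columnRank, Nat.count_succ, h]
      rw [this, ih]
      simp [columnWord, List.range_succ, h]
    · have h2 := column_columnRank h
      unfold columnWord at ih ⊢
      rw [columnRank_succ h, List.range_succ, List.range_succ, List.flatMap_append, List.flatMap_append,
        ih]
      simp [h2]

/-- Columns beyond the end of every word contribute nothing. -/
theorem columnWord_congr {α : Type*} {n : ℕ} {us : Fin n → List α} {k : Fin n → ℕ} {T T' : ℕ}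
    (h : ∀ i, k i + (us i).length ≤ T) (h' : ∀ i, k i + (us i).length ≤ T') :
    columnWord us k T = columnWord us k T' := by
  wlog hle : T ≤ T' generalizing T T'
  · exact (this h' h (by omega)).symm
  induction T', hle using Nat.le_induction with
  | base => rfl
  | succ m hm ih =>
    have : column us k m = [] := by
      by_contra hne
      obtain ⟨i, h1, h2⟩ := column_ne_nil.mp hne
      have := h i
      omega
    rw [ih (fun i => (h i).trans hm)]
    simp [columnWord, List.range_succ, this]

/-- Delays can be chosen so that all words end by column `∑ j, (us j).length`, with the same
resulting word. -/
theorem exists_compressed {α : Type*} {n : ℕ} (us : Fin n → List α) (k : Fin n → ℕ) {T : ℕ}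
    (hT : ∀ i, k i + (us i).length ≤ T) :
    ∃ k' : Fin n → ℕ, (∀ i, k' i + (us i).length ≤ ∑ j, (us j).length) ∧
      ∀ T', (∀ i, k' i + (us i).length ≤ T') → columnWord us k T = columnWord us k' T' := by
  refine ⟨fun i => columnRank us k (k i), fun i => ?_, fun T' hT' => ?_⟩
  · rw [← columnRank_add us k i le_rfl]
    exact columnRank_le us k _
  · rw [← columnWord_columnRank]
    refine columnWord_congr (fun i => ?_) hT'
    rw [← columnRank_add us k i le_rfl]
    exact columnRank_mono us k (hT i)

/-- For `N > |u₁| + … + |uₙ|`,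
`⧢₂ⁿ(u₁,…,uₙ) = ⋃_{0 ≤ k₁,…,kₙ ≤ N} { h(⧢₁ⁿ($^{k₁}u₁, …, $^{kₙ}uₙ)) }`,
where the initial literal shuffle on the right is taken over `Σ ∪ {$}`. -/
theorem stmt1 {α : Type*} {n : ℕ} (us : Fin n → List α) (N : ℕ)
    (hN : N > ∑ i, (us i).length) :
    shuffle2 us =
      { w | ∃ k : Fin n → ℕ, (∀ i, k i ≤ N) ∧
          w = (shuffle1 fun i =>
            List.replicate (k i) (none : Option α) ++ (us i).map some).reduceOption } := by
  have hsup (k : Fin n → ℕ) (i : Fin n) :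
      k i + (us i).length ≤ Finset.univ.sup fun i => k i + (us i).length :=
    Finset.le_sup (f := fun i => k i + (us i).length) (Finset.mem_univ i)
  rw [shuffle2_eq]
  ext w
  simp only [erase_shuffle1_eq, Set.mem_ofPred_eq]
  constructor
  · rintro ⟨k, hk, rfl⟩
    obtain ⟨k', hk', hw⟩ := exists_compressed us k hk
    exact ⟨k', fun i => by have := hk' i; omega, hw _ (hsup k')⟩
  · rintro ⟨k, -, rfl⟩
    obtain ⟨k', hk', hw⟩ := exists_compressed us k (hsup k)
    have hS : ∑ j, (us j).length ≤ n * Finset.univ.sup fun j => (us j).length := by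
      simpa using Finset.sum_le_card_nsmul Finset.univ (fun j => (us j).length) _
        fun j hj => Finset.le_sup (f := fun j => (us j).length) hj
    exact ⟨k', fun i => (hk' i).trans hS, hw _ fun i => (hk' i).trans hS⟩
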